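/- Let T_{p,x} = inf{q ≥ p : S_q − S_p = −|x|} (with T_{p,x} = +∞ if no such q exists). For all integers p ≤ n and all x ∈ G_ℕ: if n ≤ T_{p,x} then K_{p,n}(x) = δ_{x + e(x)·S_{p,n}}, and if n > T_{p,x} then K_{p,n}(x) = Σ_{i=1}^N α_i·δ_{S⁺_{p,n}·e_i}. -/

import Mathlib

noncomputable section

/-- The star graph `G` with `N` half-lines `D_1, …, D_N` glued at the origin, realized by
canonical representatives in `Fin N × ℝ`: a point is a pair (ray index, distance to the
origin), the origin being represented on the ray of index `N - 1` (i.e. the ray `e_N`,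
matching the convention `e(0) = e_N`). -/
def StarG (N : ℕ) : Type :=
  {p : Fin N × ℝ // 0 ≤ p.2 ∧ (p.2 = 0 → (p.1 : ℕ) = N - 1)}

namespace StarG

variable {N : ℕ}

instance : DecidableEq (StarG N) :=
  inferInstanceAs (DecidableEq {p : Fin N × ℝ // 0 ≤ p.2 ∧ (p.2 = 0 → (p.1 : ℕ) = N - 1)})

instance : MeasurableSpace (StarG N) :=
  inferInstanceAs (MeasurableSpace {p : Fin N × ℝ // 0 ≤ p.2 ∧ (p.2 = 0 → (p.1 : ℕ) = N - 1)})

/-- The ray index `e(x)` of a point, with the convention `e(0) = e_N`. -/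
def ray (x : StarG N) : Fin N := x.1.1

/-- `|x| = d(x, 0)`, the distance from `x` to the origin. -/
def nrm (x : StarG N) : ℝ := x.1.2

/-- The distance on `G`: `d(h·e_i, h'·e_j) = |h − h'|` if `i = j` and `h + h'` if
`i ≠ j`. -/
def dist (x y : StarG N) : ℝ :=
  if x.ray = y.ray then |x.nrm - y.nrm| else x.nrm + y.nrm

/-- The origin `0` of `G` (requires `N ≥ 1`). -/
def origin (hN : 1 ≤ N) : StarG N :=
  ⟨(⟨N - 1, by omega⟩, 0), le_refl 0, fun _ => rfl⟩

/-- The point `h·e_i` (sent to the origin when `h ≤ 0`; in particular `0·e_i = 0` for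
every `i`).  For `x` on the ray `D_i` and `t ≥ −|x|`, the point `x + e(x)·t` is
`pt hN (ray x) (nrm x + t)`. -/
def pt (hN : 1 ≤ N) (i : Fin N) (h : ℝ) : StarG N :=
  if hh : 0 < h then ⟨(i, h), le_of_lt hh, fun h0 => absurd h0 (ne_of_gt hh)⟩
  else origin hN

/-- `x ∈ D_i` : the point `x` lies on the `i`-th half-line (the origin lies on all). -/
def memRay (x : StarG N) (i : Fin N) : Prop := x.ray = i ∨ x.nrm = 0

/-- `x ∈ G_ℕ` : the distance from `x` to the origin is a natural number. -/
def isLattice (x : StarG N) : Prop := ∃ m : ℕ, x.nrm = (m : ℝ)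

end StarG

/-- `min_{p ≤ h ≤ n} S h` (junk value `0` when `n < p`). -/
def walkMin (S : ℤ → ℤ) (p n : ℤ) : ℤ :=
  if h : p ≤ n then (Finset.Icc p n).inf' (Finset.nonempty_Icc.mpr h) S else 0

/-- `S⁺_{p,n} = S_{p,n} − min_{p ≤ h ≤ n} S_{p,h} = S n − min_{p ≤ h ≤ n} S h`. -/
def walkPlus (S : ℤ → ℤ) (p n : ℤ) : ℤ := S n - walkMin S p n

/-- The one-step map `Ψ_{p,p+1}` on `G_ℕ`:
`Ψ_{p,p+1}(x) = x + e(x)·S_{p,p+1}` for `x ≠ 0` and `Ψ_{p,p+1}(0) = S⁺_{p,p+1}·η_p`. -/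
def psiStep {N : ℕ} (hN : 1 ≤ N) (S : ℤ → ℤ) (η : ℤ → Fin N) (p : ℤ) (x : StarG N) :
    StarG N :=
  if x.nrm = 0 then StarG.pt hN (η p) ((walkPlus S p (p + 1) : ℤ) : ℝ)
  else StarG.pt hN x.ray (x.nrm + ((S (p + 1) - S p : ℤ) : ℝ))

/-- `k`-fold composition: `psiAux hN S η p k = Ψ_{p+k-1,p+k} ∘ ⋯ ∘ Ψ_{p,p+1}`. -/
def psiAux {N : ℕ} (hN : 1 ≤ N) (S : ℤ → ℤ) (η : ℤ → Fin N) (p : ℤ) :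
    ℕ → StarG N → StarG N
  | 0 => id
  | k + 1 => fun x => psiStep hN S η (p + k) (psiAux hN S η p k x)

/-- The discrete flow of mappings `Ψ_{p,n} = Ψ_{n−1,n} ∘ ⋯ ∘ Ψ_{p,p+1}` (the identity
when `n ≤ p`). -/
def psiFlow {N : ℕ} (hN : 1 ≤ N) (S : ℤ → ℤ) (η : ℤ → Fin N) (p n : ℤ) (x : StarG N) :
    StarG N :=
  psiAux hN S η p (n - p).toNat x

/-- The Dirac mass `δ_z` on `G_ℕ`, as a point-mass function. -/
def starDirac {N : ℕ} (z : StarG N) : StarG N → ℝ := fun y => if y = z then 1 else 0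

/-- The one-step kernel `K_{p,p+1}`:
`K_{p,p+1}(x) = δ_{x + e(x)·S_{p,p+1}}` for `x ≠ 0` and
`K_{p,p+1}(0) = Σ_{i=1}^N α_i · δ_{S⁺_{p,p+1}·e_i}`. -/
def kerStep {N : ℕ} (hN : 1 ≤ N) (α : Fin N → ℝ) (S : ℤ → ℤ) (p : ℤ) (x : StarG N) :
    StarG N → ℝ :=
  if x.nrm = 0 then
    fun y => ∑ i : Fin N, α i * starDirac (StarG.pt hN i ((walkPlus S p (p + 1) : ℤ) : ℝ)) y
  else starDirac (StarG.pt hN x.ray (x.nrm + ((S (p + 1) - S p : ℤ) : ℝ)))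

/-- Kernel composition: `(K K')(x, {y}) = Σ_z K'(z, {y}) · K(x, {z})`. -/
def kerComp {N : ℕ} (K K' : StarG N → StarG N → ℝ) : StarG N → StarG N → ℝ :=
  fun x y => ∑' z : StarG N, K x z * K' z y

/-- `k`-fold kernel composition `K_{p,p+1} K_{p+1,p+2} ⋯ K_{p+k−1,p+k}`. -/
def kerAux {N : ℕ} (hN : 1 ≤ N) (α : Fin N → ℝ) (S : ℤ → ℤ) (p : ℤ) :
    ℕ → StarG N → StarG N → ℝ
  | 0 => fun x => starDirac x
  | k + 1 => kerComp (kerAux hN α S p k) (kerStep hN α S (p + k))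

/-- The discrete flow of kernels `K_{p,n} = K_{p,p+1} K_{p+1,p+2} ⋯ K_{n−1,n}`
(`K_{p,p}(x) = δ_x`). -/
def kerFlow {N : ℕ} (hN : 1 ≤ N) (α : Fin N → ℝ) (S : ℤ → ℤ) (p n : ℤ) :
    StarG N → StarG N → ℝ :=
  kerAux hN α S p (n - p).toNat

/-!
A trajectory follows the increments of `S` deterministically until the first time `T` at which it
meets the origin. Then `S_T` is the minimum of `S` over `[p, T]`, so `S⁺_{p,T} = 0`. From `T` on the
distance to the origin obeys the Lindley recursion `h ↦ max (h + ΔS) 0`, which is also the recursion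
of `S⁺_{p,·}`, and the position is spread over the rays with weights `α`; spreading again at a
later visit to the origin changes nothing because the weights sum to one.
-/

namespace StarG

variable {N : ℕ} (hN : 1 ≤ N) (i : Fin N) {h : ℝ}

lemma pt_of_nonpos (hh : h ≤ 0) : pt hN i h = origin hN := dif_neg hh.not_gt

lemma nrm_pt_of_pos (hh : 0 < h) : (pt hN i h).nrm = h :=
  congrArg nrm (dif_pos hh)

lemma ray_pt_of_pos (hh : 0 < h) : (pt hN i h).ray = i :=
  congrArg ray (dif_pos hh)

lemma pt_max_zero (h : ℝ) : pt hN i (max h 0) = pt hN i h := by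
  rcases le_total h 0 with hh | hh
  · rw [max_eq_right hh, pt_of_nonpos hN i hh, pt_of_nonpos hN i le_rfl]
  · rw [max_eq_left hh]

lemma pt_ray_nrm (x : StarG N) : pt hN x.ray x.nrm = x := by
  have hnonneg : 0 ≤ x.nrm := x.2.1
  rcases hnonneg.lt_or_eq with hpos | hzero
  · exact dif_pos hpos
  · rw [pt_of_nonpos hN _ hzero.ge]
    exact Subtype.ext (Prod.ext (Fin.ext (x.2.2 hzero.symm).symm) hzero)

end StarG

open StarG

section Walk

variable (S : ℤ → ℤ) {p n : ℤ}

lemma walkMin_self (p : ℤ) : walkMin S p p = S p := by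
  simp [walkMin]

lemma walkMin_le {j : ℤ} (hpj : p ≤ j) (hjn : j ≤ n) : walkMin S p n ≤ S j := by
  rw [walkMin, dif_pos (hpj.trans hjn)]
  exact Finset.inf'_le _ (Finset.mem_Icc.2 ⟨hpj, hjn⟩)

lemma walkMin_add_one (hpn : p ≤ n) : walkMin S p (n + 1) = min (walkMin S p n) (S (n + 1)) := by
  have hIcc : Finset.Icc p (n + 1) = insert (n + 1) (Finset.Icc p n) :=
    (Finset.insert_Icc_right_eq_Icc_add_one (by lia)).symm
  rw [walkMin, walkMin, dif_pos hpn, dif_pos (by lia),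
    Finset.inf'_congr _ hIcc fun _ _ ↦ rfl, Finset.inf'_insert, inf_comm]

lemma walkPlus_self (p : ℤ) : walkPlus S p p = 0 := by
  rw [walkPlus, walkMin_self, sub_self]

lemma walkPlus_nonneg (hpn : p ≤ n) : 0 ≤ walkPlus S p n :=
  sub_nonneg.2 (walkMin_le S hpn le_rfl)

lemma walkPlus_add_one (hpn : p ≤ n) :
    walkPlus S p (n + 1) = max (walkPlus S p n + (S (n + 1) - S n)) 0 := by
  rw [walkPlus, walkPlus, walkMin_add_one S hpn]
  lia

variable {S} in
lemma walkPlus_eq_zero (hpn : p ≤ n) (hmin : ∀ j, p ≤ j → j ≤ n → S n ≤ S j) :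
    walkPlus S p n = 0 := by
  refine le_antisymm (sub_nonpos.2 ?_) (walkPlus_nonneg S hpn)
  rw [walkMin, dif_pos hpn, Finset.le_inf'_iff]
  exact fun j hj ↦ hmin j (Finset.mem_Icc.1 hj).1 (Finset.mem_Icc.1 hj).2

lemma pt_walkPlus_add_one {N : ℕ} (hN : 1 ≤ N) (i : Fin N) (hpn : p ≤ n) :
    pt hN i (walkPlus S p (n + 1)) = pt hN i (walkPlus S p n + (S (n + 1) - S n : ℤ)) := by
  rw [walkPlus_add_one S hpn, ← pt_max_zero hN i (_ + _)]
  push_cast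
  rfl

end Walk

section Composition

variable {N : ℕ} {K : StarG N → StarG N → ℝ} {x : StarG N}

lemma kerComp_of_eq_sum_starDirac (K' : StarG N → StarG N → ℝ) {ι : Type*} [Fintype ι]
    {w : ι → ℝ} {z : ι → StarG N} (hK : K x = fun y ↦ ∑ i, w i * starDirac (z i) y) :
    kerComp K K' x = fun y ↦ ∑ i, w i * K' (z i) y := by
  funext y
  have hterm (i : ι) : HasSum (fun u ↦ w i * starDirac (z i) u * K' u y) (w i * K' (z i) y) := by
    have hsingle := hasSum_single (f := fun u ↦ w i * starDirac (z i) u * K' u y) (z i)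
      fun u hu ↦ by simp [starDirac, hu]
    simpa [starDirac] using hsingle
  simp only [kerComp, hK, Finset.sum_mul]
  exact (hasSum_sum fun i _ ↦ hterm i).tsum_eq

lemma kerComp_of_eq_starDirac (K' : StarG N → StarG N → ℝ) {z : StarG N}
    (hK : K x = starDirac z) : kerComp K K' x = K' z := by
  have hK' : K x = fun y ↦ ∑ _i : Unit, 1 * starDirac z y := by simp [hK]
  simpa using kerComp_of_eq_sum_starDirac K' hK'

end Composition

/-- The measure `Σ_i α_i · δ_{h·e_i}`, which spreads the weights `α` over the points of the star
at distance `h` from the origin; like `StarG.pt`, it reads a negative `h` as `0`. -/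
def starSpread {N : ℕ} (hN : 1 ≤ N) (α : Fin N → ℝ) (h : ℝ) : StarG N → ℝ :=
  fun y ↦ ∑ i, α i * starDirac (pt hN i h) y

section Flow

variable {N : ℕ} (hN : 1 ≤ N) (α : Fin N → ℝ) (S : ℤ → ℤ) {p n : ℤ} {x : StarG N}

lemma starSpread_walkPlus_add_one (hpn : p ≤ n) :
    starSpread hN α (walkPlus S p (n + 1)) =
      starSpread hN α (walkPlus S p n + (S (n + 1) - S n : ℤ)) := by
  funext y
  simp only [starSpread, pt_walkPlus_add_one S hN _ hpn]

lemma kerStep_origin (n : ℤ) :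
    kerStep hN α S n (origin hN) = starSpread hN α (S (n + 1) - S n : ℤ) := by
  have hstep := starSpread_walkPlus_add_one hN α S (le_refl n)
  rw [walkPlus_self, Int.cast_zero, zero_add] at hstep
  exact (if_pos rfl).trans hstep

lemma kerStep_pt_of_pos (n : ℤ) (i : Fin N) {h : ℝ} (hh : 0 < h) :
    kerStep hN α S n (pt hN i h) = starDirac (pt hN i (h + (S (n + 1) - S n : ℤ))) := by
  rw [kerStep, nrm_pt_of_pos hN i hh, ray_pt_of_pos hN i hh, if_neg hh.ne']

variable {α} in
lemma sum_mul_kerStep_pt (hsum : ∑ i, α i = 1) (n : ℤ) {h : ℝ} (hh : 0 ≤ h) :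
    (fun y ↦ ∑ i, α i * kerStep hN α S n (pt hN i h) y) =
      starSpread hN α (h + (S (n + 1) - S n : ℤ)) := by
  funext y
  rcases hh.eq_or_lt with rfl | hpos
  · simp only [pt_of_nonpos hN _ le_rfl, kerStep_origin, ← Finset.sum_mul, hsum, one_mul, zero_add]
  · simp only [kerStep_pt_of_pos hN α S n _ hpos, starSpread]

lemma kerFlow_self (p : ℤ) (x : StarG N) : kerFlow hN α S p p x = starDirac x := by
  simp [kerFlow, kerAux]

lemma kerFlow_add_one (hpn : p ≤ n) :
    kerFlow hN α S p (n + 1) = kerComp (kerFlow hN α S p n) (kerStep hN α S n) := by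
  obtain ⟨k, rfl⟩ := Int.le.dest hpn
  rw [kerFlow, kerFlow, show (p + k + 1 - p).toNat = k + 1 by lia,
    show (p + k - p).toNat = k by lia, kerAux]

variable {S}

lemma kerFlow_of_forall_lt (hpn : p ≤ n)
    (hbefore : ∀ j, p ≤ j → j < n → -x.nrm < (S j - S p : ℤ)) :
    kerFlow hN α S p n x = starDirac (pt hN x.ray (x.nrm + (S n - S p : ℤ))) := by
  induction n, hpn using Int.leInduction with
  | base => rw [kerFlow_self, sub_self, Int.cast_zero, add_zero, pt_ray_nrm]
  | succ n hpn ih =>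
    have hpos : 0 < x.nrm + (S n - S p : ℤ) := by linarith [hbefore n hpn (by lia)]
    rw [kerFlow_add_one hN α S hpn,
      kerComp_of_eq_starDirac _ (ih fun j hpj hjn ↦ hbefore j hpj (by lia)),
      kerStep_pt_of_pos hN α S n _ hpos]
    congr 2
    push_cast
    ring

lemma kerFlow_add_one_of_first_le (hpn : p ≤ n)
    (hbefore : ∀ j, p ≤ j → j < n → -x.nrm < (S j - S p : ℤ))
    (hhit : (S n - S p : ℤ) ≤ -x.nrm) :
    kerFlow hN α S p (n + 1) x = starSpread hN α (walkPlus S p (n + 1)) := by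
  have horigin : kerFlow hN α S p n x = starDirac (origin hN) := by
    rw [kerFlow_of_forall_lt hN α hpn hbefore, pt_of_nonpos hN _ (by linarith)]
  have hmin (j : ℤ) (hpj : p ≤ j) (hjn : j ≤ n) : S n ≤ S j := by
    rcases hjn.eq_or_lt with rfl | hlt
    · exact le_rfl
    · have hSub : S n - S p < S j - S p := by exact_mod_cast hhit.trans_lt (hbefore j hpj hlt)
      lia
  rw [kerFlow_add_one hN α S hpn, kerComp_of_eq_starDirac _ horigin, kerStep_origin,
    starSpread_walkPlus_add_one hN α S hpn, walkPlus_eq_zero hpn hmin, Int.cast_zero, zero_add]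

variable {α}

lemma kerFlow_add_one_of_eq_starSpread (hsum : ∑ i, α i = 1) (hpn : p ≤ n)
    (hspread : kerFlow hN α S p n x = starSpread hN α (walkPlus S p n)) :
    kerFlow hN α S p (n + 1) x = starSpread hN α (walkPlus S p (n + 1)) := by
  have hnonneg : (0 : ℝ) ≤ walkPlus S p n := by exact_mod_cast walkPlus_nonneg S hpn
  rw [kerFlow_add_one hN α S hpn, kerComp_of_eq_sum_starDirac _ hspread,
    sum_mul_kerStep_pt hN S hsum n hnonneg, starSpread_walkPlus_add_one hN α S hpn]

lemma kerFlow_of_first_le (hsum : ∑ i, α i = 1) {T : ℤ} (hpT : p ≤ T) (hTn : T + 1 ≤ n)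
    (hbefore : ∀ j, p ≤ j → j < T → -x.nrm < (S j - S p : ℤ))
    (hhit : (S T - S p : ℤ) ≤ -x.nrm) :
    kerFlow hN α S p n x = starSpread hN α (walkPlus S p n) := by
  induction n, hTn using Int.leInduction with
  | base => exact kerFlow_add_one_of_first_le hN α hpT hbefore hhit
  | succ n hTn ih => exact kerFlow_add_one_of_eq_starSpread hN hsum (by lia) ih

lemma kerFlow_of_exists_le (hsum : ∑ i, α i = 1)
    (hhit : ∃ j, p ≤ j ∧ j < n ∧ (S j - S p : ℤ) ≤ -x.nrm) :
    kerFlow hN α S p n x = starSpread hN α (walkPlus S p n) := by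
  obtain ⟨T, ⟨hpT, hTn, hhitT⟩, hleast⟩ := Int.exists_least_of_bdd ⟨p, fun _ hj ↦ hj.1⟩ hhit
  refine kerFlow_of_first_le hN hsum hpT hTn (fun j hpj hjT ↦ ?_) hhitT
  exact not_le.1 fun hj ↦ hjT.not_ge (hleast j ⟨hpj, hjT.trans hTn, hj⟩)

end Flow

/-- A step of `S` that would jump over the origin is stopped there by `StarG.pt`, hence the
hitting condition `S_{p,j} ≤ -|x|`. -/
theorem kerFlow_before_after_hitting_general {N : ℕ} (hN : 1 ≤ N) {α : Fin N → ℝ}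
    (hsum : ∑ i, α i = 1) (S : ℤ → ℤ) {p n : ℤ} (hpn : p ≤ n) (x : StarG N) :
    ((∀ j, p ≤ j → j < n → -x.nrm < (S j - S p : ℤ)) →
      kerFlow hN α S p n x = starDirac (pt hN x.ray (x.nrm + (S n - S p : ℤ)))) ∧
    ((∃ j, p ≤ j ∧ j < n ∧ (S j - S p : ℤ) ≤ -x.nrm) →
      kerFlow hN α S p n x = starSpread hN α (walkPlus S p n)) :=
  ⟨kerFlow_of_forall_lt hN α hpn, kerFlow_of_exists_le hN hsum⟩

/-- Let `T_{p,x} = inf {q ≥ p : S q − S p = −|x|}`.  For all integers `p ≤ n` and all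
`x ∈ G_ℕ`: if `n ≤ T_{p,x}` (i.e. `S_{p,j} > −|x|` for all `p ≤ j < n`) then
`K_{p,n}(x) = δ_{x + e(x)·S_{p,n}}`, and if `n > T_{p,x}` (i.e. `S_{p,j} = −|x|` for some
`p ≤ j < n`) then `K_{p,n}(x) = Σ_{i=1}^N α_i · δ_{S⁺_{p,n}·e_i}`. -/
theorem kerFlow_before_after_hitting (N : ℕ) (hN : 1 ≤ N) (α : Fin N → ℝ)
    (hα : ∀ i, 0 < α i) (hsum : ∑ i, α i = 1) (S : ℤ → ℤ)
    (hS : ∀ n : ℤ, S n - S (n - 1) = 1 ∨ S n - S (n - 1) = -1)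
    (p n : ℤ) (hpn : p ≤ n) (x : StarG N) (hx : x.isLattice) :
    ((∀ j : ℤ, p ≤ j → j < n → -x.nrm < ((S j - S p : ℤ) : ℝ)) →
      kerFlow hN α S p n x = starDirac (StarG.pt hN x.ray (x.nrm + ((S n - S p : ℤ) : ℝ)))) ∧
    ((∃ j : ℤ, p ≤ j ∧ j < n ∧ ((S j - S p : ℤ) : ℝ) = -x.nrm) →
      kerFlow hN α S p n x =
        fun y => ∑ i : Fin N, α i * starDirac (StarG.pt hN i ((walkPlus S p n : ℤ) : ℝ)) y) := by
  obtain ⟨hbefore, hafter⟩ := kerFlow_before_after_hitting_general hN hsum S hpn x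
  exact ⟨hbefore, fun ⟨j, hpj, hjn, hhit⟩ ↦ hafter ⟨j, hpj, hjn, hhit.le⟩⟩
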